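/- Let K ≥ 2 be an integer and A,B integers with (A,B) not both ≡ 0 mod K, and let μ ∈ ℂ with Im μ > 0. For all γ, z, g ∈ ℂ such that θ_{[00]} does not vanish at γ−z, z−g, γ−g and g−z, θ_{[AB]}(γ−z;μ) ≠ 0 and θ_{[AB]}(0;μ) ≠ 0, the following identity holds: w_{AB}(γ−z;μ)·(ρ(z−g;μ) − ρ(γ−g;μ)) + 2πi·Z_{AB}(γ−z;μ) = −w_{AB}(g−z;μ)·w_{AB}(γ−g;μ). -/

import Mathlib

open Complex Filter

/-- Theta function with characteristics `p, q`. -/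
noncomputable def Theta (p q : ℝ) (γ μ : ℂ) : ℂ :=
  ∑' m : ℤ, Complex.exp ((Real.pi : ℂ) * Complex.I * μ * ((m : ℂ) + (p : ℂ))^2
    + 2 * (Real.pi : ℂ) * Complex.I * ((m : ℂ) + (p : ℂ)) * (γ + (q : ℂ)))

/-- The Jacobi theta function `θ₁`. -/
noncomputable def theta1 (γ μ : ℂ) : ℂ := -Theta (1/2) (1/2) γ μ

/-- Logarithmic derivative of `θ₁` in the first argument. -/
noncomputable def rho (γ μ : ℂ) : ℂ := deriv (fun z => theta1 z μ) γ / theta1 γ μ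

/-- `θ_{[AB]}`, theta with characteristics `A/K - 1/2`, `1/2 - B/K`. -/
noncomputable def thetaAB (K : ℕ) (A B : ℤ) (γ μ : ℂ) : ℂ :=
  Theta ((A : ℝ)/(K : ℝ) - 1/2) (1/2 - (B : ℝ)/(K : ℝ)) γ μ

/-- The coefficients `w_{AB}` of the elliptic r-matrix. -/
noncomputable def wAB (K : ℕ) (A B : ℤ) (γ μ : ℂ) : ℂ :=
  thetaAB K A B γ μ * deriv (fun z => thetaAB K 0 0 z μ) 0
    / (thetaAB K A B 0 μ * thetaAB K 0 0 γ μ)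

/-- The functions `Z_{AB}`. -/
noncomputable def ZAB (K : ℕ) (A B : ℤ) (γ μ : ℂ) : ℂ :=
  wAB K A B γ μ / (2 * (Real.pi : ℂ) * Complex.I) *
    (deriv (fun z => thetaAB K A B z μ) γ / thetaAB K A B γ μ
      - deriv (fun z => thetaAB K A B z μ) 0 / thetaAB K A B 0 μ)

/-- `ε = exp(2πi/K)`. -/
noncomputable def epsK (K : ℕ) : ℂ := Complex.exp (2 * (Real.pi : ℂ) * Complex.I / (K : ℂ))

/-- The diagonal matrix `F = diag(1, ε, …, ε^{K-1})`. -/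
noncomputable def Fmat (K : ℕ) : Matrix (Fin K) (Fin K) ℂ :=
  Matrix.diagonal (fun i => epsK K ^ (i : ℕ))

/-- The cyclic permutation matrix `H`. -/
def Hmat (K : ℕ) : Matrix (Fin K) (Fin K) ℂ :=
  Matrix.of fun i j => if (j : ℕ) = ((i : ℕ) + 1) % K then 1 else 0

/-- `σ_{AB} = H^A F^B` (indices taken mod `K`, using `H^K = F^K = 1`). -/
noncomputable def sigmaAB (K : ℕ) (A B : ℤ) : Matrix (Fin K) (Fin K) ℂ :=
  Hmat K ^ ((A % (K : ℤ)).toNat) * Fmat K ^ ((B % (K : ℤ)).toNat)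

/-- The dual basis `σ^{AB} = (ε^{-AB}/K)·σ_{-A,-B}`. -/
noncomputable def sigmaDualAB (K : ℕ) (A B : ℤ) : Matrix (Fin K) (Fin K) ℂ :=
  (epsK K ^ (-(A * B)) / (K : ℂ)) • sigmaAB K (-A) (-B)

open Kronecker in
/-- The elliptic r-matrix. -/
noncomputable def rmat (K : ℕ) (γ μ : ℂ) : Matrix (Fin K × Fin K) (Fin K × Fin K) ℂ :=
  ∑ A ∈ Finset.range K, ∑ B ∈ Finset.range K,
    if A = 0 ∧ B = 0 then 0
    else wAB K A B γ μ • (sigmaAB K A B ⊗ₖ sigmaDualAB K A B)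

/-!
Expressing `θ[p,q](x + y; μ) θ[p',q'](x - y; μ)` through theta functions of modulus `2μ` writes
`θ₁(x + y) θ₁(x - y)` in the form `P x * Q y - Q x * P y`, whence `f = θ₁` satisfies Weierstrass'
three-term relation. Its derivative along the diagonal `c = d` is, after division, an identity for
the Kronecker function `φ(x, e) = f(x + e) f'(0) / (f x * f e)`:
`φ(x, e) φ(y, e) = φ(x + y, e) (ρ x + ρ y + ρ e - ρ (x + y + e))`, with `ρ` the logarithmic
derivative of `f`. A theta function with other characteristics is `C exp(c x) θ₁(x + e)`, and both
sides are multiplied by `exp(c (x + y))` when `f(x + e)` is replaced by it.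
-/

section ThreeTerm

/-- Weierstrass' three-term relation, satisfied by the Weierstrass `σ` function and by `θ₁`. -/
def ThreeTermRelation {R : Type*} [CommRing R] (f : R → R) : Prop :=
  ∀ a b c d, f (a + b) * f (a - b) * (f (c + d) * f (c - d))
    + f (b + c) * f (b - c) * (f (a + d) * f (a - d))
    + f (c + a) * f (c - a) * (f (b + d) * f (b - d)) = 0

theorem ThreeTermRelation.of_add_mul_sub {R : Type*} [CommRing R] {f P Q : R → R}
    (h : ∀ x y, f (x + y) * f (x - y) = P x * Q y - Q x * P y) : ThreeTermRelation f := by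
  intro a b c d
  simp only [h]
  ring

/-- The quotient `T / f`, scaled by a constant so that its residue at `0` is `1` when `0` is a
simple zero of `f` and `T 0 ≠ 0`. For `T x = f (x + e)` it is the Kronecker function of `f`, and
`wAB` is the case of theta functions. -/
noncomputable def residueOneQuotient {𝕜 : Type*} [NontriviallyNormedField 𝕜] (T f : 𝕜 → 𝕜)
    (x : 𝕜) : 𝕜 :=
  T x * deriv f 0 / (T 0 * f x)

variable {𝕜 : Type*} [NontriviallyNormedField 𝕜] {f : 𝕜 → 𝕜}

theorem residueOneQuotient_neg_right (T f : 𝕜 → 𝕜) :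
    residueOneQuotient T (fun x ↦ -f x) = residueOneQuotient T f := by
  funext x
  simp only [residueOneQuotient, deriv.fun_neg, mul_neg, neg_div_neg_eq]

theorem logDeriv_neg_of_odd (hodd : f.Odd) (x : 𝕜) : logDeriv f (-x) = -logDeriv f x := by
  have hderiv : deriv f (-x) = deriv f x := by
    rw [← neg_inj, ← deriv_comp_neg, funext hodd, deriv.fun_neg]
  rw [logDeriv_apply, logDeriv_apply, hderiv, hodd, div_neg]

theorem ThreeTermRelation.deriv_diagonal (h : ThreeTermRelation f) (hf : Differentiable 𝕜 f)
    (h0 : f 0 = 0) (a b d : 𝕜) :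
    f (a + b) * f (a - b) * (f (d + d) * deriv f 0)
      + (deriv f (b + d) * f (b - d) - f (b + d) * deriv f (b - d)) * (f (a + d) * f (a - d))
      + (deriv f (d + a) * f (d - a) + f (d + a) * deriv f (d - a)) * (f (b + d) * f (b - d))
      = 0 := by
  have add_const (u : 𝕜) : HasDerivAt (fun c ↦ f (c + u)) (deriv f (d + u)) d :=
    (hf _).hasDerivAt.comp_add_const d u
  have const_add (u : 𝕜) : HasDerivAt (fun c ↦ f (u + c)) (deriv f (u + d)) d :=
    (hf _).hasDerivAt.comp_const_add u d
  have sub_const (u : 𝕜) : HasDerivAt (fun c ↦ f (c - u)) (deriv f (d - u)) d :=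
    (hf _).hasDerivAt.comp_sub_const d u
  have const_sub (u : 𝕜) : HasDerivAt (fun c ↦ f (u - c)) (-deriv f (u - d)) d :=
    (hf _).hasDerivAt.comp_const_sub u d
  have hderiv := ((((add_const d).mul (sub_const d)).const_mul (f (a + b) * f (a - b))).add
    (((const_add b).mul (const_sub b)).mul_const (f (a + d) * f (a - d)))).add
    (((add_const a).mul (sub_const a)).mul_const (f (b + d) * f (b - d)))
  have hzero := hderiv.unique <| (hasDerivAt_const d (0 : 𝕜)).congr_of_eventuallyEq <|
    .of_forall fun c ↦ h a b c d
  rw [sub_self, h0] at hzero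
  linear_combination hzero

theorem ThreeTermRelation.mul_mul_mul_deriv_zero [NeZero (2 : 𝕜)] (h : ThreeTermRelation f)
    (hf : Differentiable 𝕜 f) (hodd : f.Odd) (x y e : 𝕜) :
    f (x + e) * f (y + e) * f (x + y) * deriv f 0 =
      (deriv f x * f y * f e + f x * deriv f y * f e + f x * f y * deriv f e) * f (x + y + e)
        - f x * f y * f e * deriv f (x + y + e) := by
  have h2 : (2 : 𝕜) ≠ 0 := two_ne_zero
  have h0 : f 0 = 0 := by
    have h00 := hodd 0
    rw [neg_zero] at h00
    refine (mul_eq_zero_iff_left h2).mp ?_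
    linear_combination h00
  obtain ⟨a, b, d, rfl, rfl, rfl⟩ : ∃ a b d : 𝕜, x = a + d ∧ y = d - a ∧ e = b - d :=
    ⟨(x - y) / 2, e + (x + y) / 2, (x + y) / 2, by field_simp; ring, by field_simp; ring, by ring⟩
  have hdiag := h.deriv_diagonal hf h0 a b d
  rw [← neg_sub d a, ← neg_sub b a, hodd, hodd, add_comm d a] at hdiag
  rw [show a + d + (b - d) = a + b by ring, show d - a + (b - d) = b - a by ring,
    show a + d + (d - a) = d + d by ring, show d + d + (b - d) = b + d by ring]
  linear_combination -hdiag

theorem ThreeTermRelation.residueOneQuotient_mul [NeZero (2 : 𝕜)] (h : ThreeTermRelation f)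
    (hf : Differentiable 𝕜 f) (hodd : f.Odd) {x y e : 𝕜} (hx : f x ≠ 0) (hy : f y ≠ 0)
    (he : f e ≠ 0) (hxy : f (x + y) ≠ 0) (hxye : f (x + y + e) ≠ 0) :
    residueOneQuotient (fun t ↦ f (t + e)) f x * residueOneQuotient (fun t ↦ f (t + e)) f y =
      residueOneQuotient (fun t ↦ f (t + e)) f (x + y) *
        (logDeriv f x + logDeriv f y + logDeriv f e - logDeriv f (x + y + e)) := by
  have key := h.mul_mul_mul_deriv_zero hf hodd x y e
  simp only [residueOneQuotient, zero_add, logDeriv_apply]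
  field_simp
  linear_combination deriv f 0 * key

end ThreeTerm

section ExponentialTwist

variable {f T : ℂ → ℂ} {C c e : ℂ}

theorem residueOneQuotient_of_eq_exp_mul (hC : C ≠ 0) (hT : ∀ x, T x = C * exp (c * x) * f (x + e))
    (x : ℂ) :
    residueOneQuotient T f x = exp (c * x) * residueOneQuotient (fun t ↦ f (t + e)) f x := by
  simp only [residueOneQuotient, hT, mul_zero, exp_zero, mul_one]
  rw [show C * exp (c * x) * f (x + e) * deriv f 0 = C * (exp (c * x) * (f (x + e) * deriv f 0))
      by ring, mul_assoc C, mul_div_mul_left _ _ hC, mul_div_assoc]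

theorem logDeriv_of_eq_exp_mul (hC : C ≠ 0) (hf : Differentiable ℂ f)
    (hT : ∀ x, T x = C * exp (c * x) * f (x + e)) {x : ℂ} (hx : f (x + e) ≠ 0) :
    logDeriv T x = c + logDeriv f (x + e) := by
  have hexp : HasDerivAt (fun t ↦ C * exp (c * t)) (C * (exp (c * x) * c)) x := by
    simpa using (((hasDerivAt_id x).const_mul c).cexp).const_mul C
  have hE : C * exp (c * x) ≠ 0 := mul_ne_zero hC (exp_ne_zero _)
  rw [funext hT, logDeriv_mul x hE hx hexp.differentiableAt (by fun_prop), logDeriv_apply,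
    hexp.deriv, logDeriv_apply, logDeriv_apply, deriv_comp_add_const]
  field_simp

theorem ThreeTermRelation.residueOneQuotient_mul_of_eq_exp_mul (h : ThreeTermRelation f)
    (hf : Differentiable ℂ f) (hodd : f.Odd)
    (hT : ∀ x, T x = C * exp (c * x) * f (x + e)) {x y : ℂ} (hx : f x ≠ 0) (hy : f y ≠ 0)
    (hxy : f (x + y) ≠ 0) (hT0 : T 0 ≠ 0) (hTxy : T (x + y) ≠ 0) :
    residueOneQuotient T f x * residueOneQuotient T f y =
      residueOneQuotient T f (x + y) *
        (logDeriv f x + logDeriv f y + logDeriv T 0 - logDeriv T (x + y)) := by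
  have hC : C ≠ 0 := left_ne_zero_of_mul (left_ne_zero_of_mul (hT 0 ▸ hT0))
  have hfe : f (0 + e) ≠ 0 := right_ne_zero_of_mul (hT 0 ▸ hT0)
  have hfxye : f (x + y + e) ≠ 0 := right_ne_zero_of_mul (hT (x + y) ▸ hTxy)
  rw [logDeriv_of_eq_exp_mul hC hf hT hfe, logDeriv_of_eq_exp_mul hC hf hT hfxye, zero_add]
  simp only [residueOneQuotient_of_eq_exp_mul hC hT, mul_add c, exp_add]
  linear_combination exp (c * x) * exp (c * y) *
    h.residueOneQuotient_mul hf hodd hx hy (zero_add e ▸ hfe) hxy hfxye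

end ExponentialTwist

section ParitySplitting

/-- Splits `ℤ × ℤ` by the parity of the sum of the coordinates: `inl (i, j) ↦ (i + j, i - j)` and
`inr (i, j) ↦ (i + j + 1, i - j)`. -/
noncomputable def intProdParityEquiv : (ℤ × ℤ) ⊕ (ℤ × ℤ) ≃ ℤ × ℤ :=
  Equiv.ofBijective
    (Sum.elim (fun k ↦ (k.1 + k.2, k.1 - k.2)) (fun k ↦ (k.1 + k.2 + 1, k.1 - k.2))) <| by
    constructor
    · rintro (⟨i, j⟩ | ⟨i, j⟩) (⟨i', j'⟩ | ⟨i', j'⟩) h <;>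
        simp only [Sum.elim_inl, Sum.elim_inr, Prod.mk.injEq] at h <;>
        simp only [Sum.inl.injEq, Sum.inr.injEq, Prod.mk.injEq, reduceCtorEq] <;> omega
    · rintro ⟨m, n⟩
      obtain ⟨k, hk⟩ | ⟨k, hk⟩ := Int.even_or_odd (m + n)
      · exact ⟨.inl (k, m - k), by simp only [Sum.elim_inl, Prod.mk.injEq]; omega⟩
      · exact ⟨.inr (k, m - 1 - k), by simp only [Sum.elim_inr, Prod.mk.injEq]; omega⟩

theorem hasSum_int_prod_of_parity {α : Type*} [AddCommMonoid α] [TopologicalSpace α]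
    [ContinuousAdd α] {F : ℤ × ℤ → α} {s t : α}
    (heven : HasSum (fun k : ℤ × ℤ ↦ F (k.1 + k.2, k.1 - k.2)) s)
    (hodd : HasSum (fun k : ℤ × ℤ ↦ F (k.1 + k.2 + 1, k.1 - k.2)) t) : HasSum F (s + t) :=
  intProdParityEquiv.hasSum_iff.mp (HasSum.sum heven hodd)

end ParitySplitting

section Theta

open scoped Real

theorem Theta_add_char (p q p' q' : ℝ) (x μ : ℂ) :
    Theta (p + p') (q + q') x μ =
      exp (π * I * μ * p' ^ 2 + 2 * π * I * p' * (x + q + q')) *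
        Theta p q (x + (p' * μ + q')) μ := by
  simp only [Theta, ← tsum_mul_left, ← exp_add]
  refine tsum_congr fun m ↦ congrArg exp ?_
  push_cast
  ring

theorem Theta_add_one_left (p q : ℝ) (x μ : ℂ) : Theta (p + 1) q x μ = Theta p q x μ := by
  rw [Theta, Theta, ← (Equiv.subRight (1 : ℤ)).tsum_eq]
  refine tsum_congr fun m ↦ congrArg exp ?_
  simp only [Equiv.subRight_apply]
  push_cast
  ring

theorem Theta_add_one_right (p q : ℝ) (x μ : ℂ) :
    Theta p (q + 1) x μ = exp (2 * π * I * p) * Theta p q x μ := by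
  simp only [Theta, ← tsum_mul_left, ← exp_add]
  refine tsum_congr fun m ↦ exp_eq_exp_iff_exists_int.mpr ⟨m, ?_⟩
  push_cast
  ring

theorem Theta_neg (p q : ℝ) (x μ : ℂ) : Theta (-p) (-q) (-x) μ = Theta p q x μ := by
  rw [Theta, Theta, ← (Equiv.neg ℤ).tsum_eq]
  refine tsum_congr fun m ↦ congrArg exp ?_
  simp only [Equiv.neg_apply]
  push_cast
  ring

theorem Theta_half_add_one_right (q : ℝ) (x μ : ℂ) :
    Theta (1 / 2) (q + 1) x μ = -Theta (1 / 2) q x μ := by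
  have hexp : exp (2 * π * I * (1 / 2 : ℝ)) = -1 := by
    rw [← exp_pi_mul_I]
    push_cast
    ring_nf
  rw [Theta_add_one_right, hexp, neg_one_mul]

theorem Theta_zero_zero (x μ : ℂ) : Theta 0 0 x μ = jacobiTheta₂ x μ := by
  refine tsum_congr fun m ↦ congrArg exp ?_
  push_cast
  ring

theorem Theta_eq_exp_mul_jacobiTheta₂ (p q : ℝ) (x μ : ℂ) :
    Theta p q x μ =
      exp (π * I * μ * p ^ 2 + 2 * π * I * p * (x + q)) * jacobiTheta₂ (x + (p * μ + q)) μ := by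
  simpa [Theta_zero_zero] using Theta_add_char 0 0 p q x μ

theorem differentiable_Theta (p q : ℝ) {μ : ℂ} (hμ : 0 < μ.im) :
    Differentiable ℂ (Theta p q · μ) := by
  have hjacobi : Differentiable ℂ (jacobiTheta₂ · μ) := fun _ ↦
    differentiableAt_jacobiTheta₂_fst _ hμ
  simp only [Theta_eq_exp_mul_jacobiTheta₂]
  fun_prop

/-- The summand of the series defining `Theta`. -/
noncomputable def thetaTerm (p q : ℝ) (x μ : ℂ) (m : ℤ) : ℂ :=
  exp (π * I * μ * (m + p) ^ 2 + 2 * π * I * (m + p) * (x + q))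

theorem hasSum_Theta (p q : ℝ) (x : ℂ) {μ : ℂ} (hμ : 0 < μ.im) :
    HasSum (thetaTerm p q x μ) (Theta p q x μ) := by
  rw [Theta_eq_exp_mul_jacobiTheta₂]
  refine ((hasSum_jacobiTheta₂_term _ hμ).mul_left _).congr_fun fun m ↦ ?_
  rw [thetaTerm, jacobiTheta₂_term, ← exp_add]
  ring_nf

theorem hasSum_Theta_mul_Theta (p q p' q' : ℝ) (x y : ℂ) {μ ν : ℂ} (hμ : 0 < μ.im)
    (hν : 0 < ν.im) :
    HasSum (fun k : ℤ × ℤ ↦ thetaTerm p q x μ k.1 * thetaTerm p' q' y ν k.2)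
      (Theta p q x μ * Theta p' q' y ν) :=
  have hx := hasSum_Theta p q x hμ
  have hy := hasSum_Theta p' q' y hν
  hx.mul hy (summable_mul_of_summable_norm hx.summable.norm hy.summable.norm)

-- Put `m = i + j + δ`, `n = i - j` with `δ ∈ {0, 1}` in the double series; the exponents then
-- separate because `(u + v) ^ 2 + (u - v) ^ 2 = 2 * u ^ 2 + 2 * v ^ 2`.
theorem Theta_mul_Theta (p q p' q' : ℝ) (x y : ℂ) {μ : ℂ} (hμ : 0 < μ.im) :
    Theta p q (x + y) μ * Theta p' q' (x - y) μ =
      Theta ((p + p') / 2) (q + q') (2 * x) (2 * μ) * Theta ((p - p') / 2) (q - q') (2 * y) (2 * μ)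
      + Theta ((p + p' + 1) / 2) (q + q') (2 * x) (2 * μ) *
        Theta ((p - p' + 1) / 2) (q - q') (2 * y) (2 * μ) := by
  have h2μ : 0 < (2 * μ).im := by simpa using hμ
  refine (hasSum_Theta_mul_Theta p q p' q' (x + y) (x - y) hμ hμ).unique
    (hasSum_int_prod_of_parity ?_ ?_)
  all_goals
    refine (hasSum_Theta_mul_Theta _ _ _ _ _ _ h2μ h2μ).congr_fun fun k ↦ ?_
    simp only [thetaTerm, ← exp_add]
    push_cast
    ring_nf

end Theta

section Theta1

open scoped Real

theorem differentiable_theta1 {μ : ℂ} (hμ : 0 < μ.im) : Differentiable ℂ (theta1 · μ) :=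
  (differentiable_Theta _ _ hμ).neg

theorem theta1_odd (μ : ℂ) : (theta1 · μ).Odd := by
  intro x
  have hneg : Theta (1 / 2) (1 / 2) (-x) μ = Theta (1 / 2) (-1 / 2) x μ := by
    rw [← Theta_neg, ← Theta_add_one_left]
    norm_num
  have hshift : Theta (1 / 2) (1 / 2) x μ = -Theta (1 / 2) (-1 / 2) x μ := by
    rw [← Theta_half_add_one_right]
    norm_num
  simp only [theta1, hneg, hshift, neg_neg]

theorem theta1_add_mul_theta1_sub {μ : ℂ} (hμ : 0 < μ.im) (x y : ℂ) :
    theta1 (x + y) μ * theta1 (x - y) μ =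
      Theta 0 0 (2 * x) (2 * μ) * Theta (1 / 2) 0 (2 * y) (2 * μ)
        - Theta (1 / 2) 0 (2 * x) (2 * μ) * Theta 0 0 (2 * y) (2 * μ) := by
  have hhalf : Theta (1 / 2) 1 (2 * x) (2 * μ) = -Theta (1 / 2) 0 (2 * x) (2 * μ) := by
    simpa only [zero_add] using Theta_half_add_one_right 0 (2 * x) (2 * μ)
  have hone : Theta 1 1 (2 * x) (2 * μ) = Theta 0 0 (2 * x) (2 * μ) := by
    have hleft := Theta_add_one_left 0 1 (2 * x) (2 * μ)
    have hright := Theta_add_one_right 0 0 (2 * x) (2 * μ)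
    simp only [zero_add, ofReal_zero, mul_zero, exp_zero, one_mul] at hleft hright
    rw [hleft, hright]
  have hmul := Theta_mul_Theta (1 / 2) (1 / 2) (1 / 2) (1 / 2) x y hμ
  norm_num only at hmul
  rw [hhalf, hone] at hmul
  rw [theta1, theta1]
  linear_combination hmul

theorem threeTermRelation_theta1 {μ : ℂ} (hμ : 0 < μ.im) : ThreeTermRelation (theta1 · μ) :=
  .of_add_mul_sub (theta1_add_mul_theta1_sub hμ)

theorem exists_Theta_eq_exp_mul_theta1 (p q : ℝ) (μ : ℂ) :
    ∃ C c e : ℂ, ∀ x, Theta p q x μ = C * exp (c * x) * theta1 (x + e) μ := by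
  obtain ⟨p, rfl⟩ : ∃ p', p = 1 / 2 + p' := ⟨p - 1 / 2, by ring⟩
  obtain ⟨q, rfl⟩ : ∃ q', q = 1 / 2 + q' := ⟨q - 1 / 2, by ring⟩
  refine ⟨-exp (π * I * μ * p ^ 2 + 2 * π * I * p * ((1 / 2 : ℝ) + q)), 2 * π * I * p, p * μ + q,
    fun x ↦ ?_⟩
  rw [Theta_add_char, theta1, neg_mul, neg_mul_neg, ← exp_add]
  ring_nf

theorem rho_eq_logDeriv (x μ : ℂ) : rho x μ = logDeriv (theta1 · μ) x := rfl

theorem thetaAB_zero_zero (K : ℕ) (x μ : ℂ) : thetaAB K 0 0 x μ = -theta1 x μ := by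
  rw [thetaAB, theta1, neg_neg, ← Theta_add_one_left]
  norm_num

theorem wAB_eq_residueOneQuotient (K : ℕ) (A B : ℤ) (x μ : ℂ) :
    wAB K A B x μ = residueOneQuotient (thetaAB K A B · μ) (theta1 · μ) x := by
  rw [← residueOneQuotient_neg_right]
  simp only [← thetaAB_zero_zero K]
  rfl

theorem two_pi_I_mul_ZAB (K : ℕ) (A B : ℤ) (x μ : ℂ) :
    2 * π * I * ZAB K A B x μ =
      wAB K A B x μ * (logDeriv (thetaAB K A B · μ) x - logDeriv (thetaAB K A B · μ) 0) := by
  rw [ZAB, ← mul_assoc, mul_div_cancel₀ _ two_pi_I_ne_zero]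
  rfl

end Theta1

theorem wAB_rho_ZAB_identity_general (p q : ℝ) {μ : ℂ} (hμ : 0 < μ.im) {γ z g : ℂ}
    (hγz : theta1 (γ - z) μ ≠ 0) (hγg : theta1 (γ - g) μ ≠ 0) (hgz : theta1 (g - z) μ ≠ 0)
    (hΘγz : Theta p q (γ - z) μ ≠ 0) (hΘ0 : Theta p q 0 μ ≠ 0) :
    residueOneQuotient (Theta p q · μ) (theta1 · μ) (γ - z) * (rho (z - g) μ - rho (γ - g) μ)
        + residueOneQuotient (Theta p q · μ) (theta1 · μ) (γ - z) *
          (logDeriv (Theta p q · μ) (γ - z) - logDeriv (Theta p q · μ) 0)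
      = -(residueOneQuotient (Theta p q · μ) (theta1 · μ) (g - z) *
          residueOneQuotient (Theta p q · μ) (theta1 · μ) (γ - g)) := by
  obtain ⟨C, c, e, hΘ⟩ := exists_Theta_eq_exp_mul_theta1 p q μ
  rw [← sub_add_sub_cancel' g z γ] at hγz hΘγz ⊢
  have hmul := (threeTermRelation_theta1 hμ).residueOneQuotient_mul_of_eq_exp_mul
    (differentiable_theta1 hμ) (theta1_odd μ) hΘ hgz hγg hγz hΘ0 hΘγz
  rw [hmul, ← neg_sub g z, rho_eq_logDeriv, rho_eq_logDeriv, logDeriv_neg_of_odd (theta1_odd μ)]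
  ring

/-- the identity
`w_{AB}(γ−z)(ρ(z−g) − ρ(γ−g)) + 2πi·Z_{AB}(γ−z) = −w_{AB}(g−z)·w_{AB}(γ−g)`. -/
theorem wAB_rho_ZAB_identity (K : ℕ) (hK : 2 ≤ K) (A B : ℤ)
    (hAB : ¬(A % (K : ℤ) = 0 ∧ B % (K : ℤ) = 0)) (μ : ℂ) (hμ : 0 < μ.im)
    (γ z g : ℂ)
    (h1 : thetaAB K 0 0 (γ - z) μ ≠ 0) (h2 : thetaAB K 0 0 (z - g) μ ≠ 0)
    (h3 : thetaAB K 0 0 (γ - g) μ ≠ 0) (h4 : thetaAB K 0 0 (g - z) μ ≠ 0)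
    (h5 : thetaAB K A B (γ - z) μ ≠ 0) (h6 : thetaAB K A B 0 μ ≠ 0) :
    wAB K A B (γ - z) μ * (rho (z - g) μ - rho (γ - g) μ)
        + 2 * (Real.pi : ℂ) * Complex.I * ZAB K A B (γ - z) μ
      = -(wAB K A B (g - z) μ * wAB K A B (γ - g) μ) := by
  simp only [thetaAB_zero_zero, neg_ne_zero] at h1 h3 h4
  simp only [two_pi_I_mul_ZAB, wAB_eq_residueOneQuotient]
  exact wAB_rho_ZAB_identity_general _ _ hμ h1 h3 h4 h5 h6
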